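/- Let b be a connected, canonically compactifiable graph over a finite discrete measure space (X,m), and let h ∈ ℓ²(X,m) with h̄ < 0. Then there exists c₋ < 0 such that for every c with c₋ < c < 0 there exists an upper solution u₁ ∈ D(L) for the equation Lu = h e^u − c. If moreover h ≤ 0 pointwise, then for every c < 0 there exists an upper solution u₁ ∈ D(L). -/

import Mathlib

open scoped BigOperators

/-- `u` is square-summable with respect to the measure `m`, i.e. `u ∈ ℓ²(X,m)`. -/
def MemL2 {X : Type*} (m : X → ℝ) (u : X → ℝ) : Prop :=
  Summable (fun x => u x ^ 2 * m x)

/-- `u` has finite energy: the sum defining `Q̃(u)` converges. -/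
def FinEnergy {X : Type*} (b : X → X → ℝ) (u : X → ℝ) : Prop :=
  Summable (fun p : X × X => b p.1 p.2 * (u p.1 - u p.2) ^ 2)

/-- The energy `Q(u) = (1/2) Σ_{x,y} b(x,y) (u(x) - u(y))²`. -/
noncomputable def energy {X : Type*} (b : X → X → ℝ) (u : X → ℝ) : ℝ :=
  (1 / 2) * ∑' p : X × X, b p.1 p.2 * (u p.1 - u p.2) ^ 2

/-- The bilinear energy form `Q(u,v) = (1/2) Σ_{x,y} b(x,y)(u(x)-u(y))(v(x)-v(y))`. -/
noncomputable def energyBil {X : Type*} (b : X → X → ℝ) (u v : X → ℝ) : ℝ :=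
  (1 / 2) * ∑' p : X × X, b p.1 p.2 * (u p.1 - u p.2) * (v p.1 - v p.2)

/-- The form domain `D(Q) = ℓ²(X,m) ∩ D̃`. -/
def MemDQ {X : Type*} (b : X → X → ℝ) (m : X → ℝ) (u : X → ℝ) : Prop :=
  MemL2 m u ∧ FinEnergy b u

/-- The form norm `‖u‖_Q = (Q(u) + ‖u‖₂²)^{1/2}`. -/
noncomputable def formNorm {X : Type*} (b : X → X → ℝ) (m : X → ℝ) (u : X → ℝ) : ℝ :=
  Real.sqrt (energy b u + ∑' x, u x ^ 2 * m x)

/-- `b` is a graph over `X`: symmetric, nonnegative, zero on the diagonal,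
with summable rows. -/
structure IsGraph {X : Type*} (b : X → X → ℝ) : Prop where
  symm : ∀ x y, b x y = b y x
  nonneg : ∀ x y, 0 ≤ b x y
  diag : ∀ x, b x x = 0
  row_summable : ∀ x, Summable (fun y => b x y)

/-- The graph `b` is connected: any two points are joined by a path of edges of
positive weight. -/
def GraphConnected {X : Type*} (b : X → X → ℝ) : Prop :=
  ∀ x y : X, Relation.ReflTransGen (fun a c => 0 < b a c) x y

/-- `(X,m)` is a finite discrete measure space: `m > 0` everywhere and `m(X) < ∞`. -/
structure FinMeasure {X : Type*} (m : X → ℝ) : Prop where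
  pos : ∀ x, 0 < m x
  summable : Summable m

/-- The graph `b` over `(X,m)` is canonically compactifiable: every function in
`D(Q)` is bounded. -/
def CanCompact {X : Type*} (b : X → X → ℝ) (m : X → ℝ) : Prop :=
  ∀ u : X → ℝ, MemDQ b m u → ∃ M : ℝ, ∀ x, |u x| ≤ M

/-- `u ∈ D(L)` with `L u = f` for the Neumann Laplacian `L`:
`u ∈ D(Q)`, `f ∈ ℓ²(X,m)` and `Q(u,v) = ⟨f,v⟩` for all `v ∈ D(Q)`. -/
def IsLap {X : Type*} (b : X → X → ℝ) (m : X → ℝ) (u f : X → ℝ) : Prop :=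
  MemDQ b m u ∧ MemL2 m f ∧
    ∀ v : X → ℝ, MemDQ b m v → energyBil b u v = ∑' x, f x * v x * m x

/-- The mean `ū = ⟨u,1⟩ / m(X)`. -/
noncomputable def mean {X : Type*} (m : X → ℝ) (u : X → ℝ) : ℝ :=
  (∑' x, u x * m x) / (∑' x, m x)

lemma cs_aux (a : ℕ → ℝ) (ha : Summable (fun n => (8:ℝ)^n * a n ^ 2)) :
    Summable (fun n => (2:ℝ)^n * |a n|) ∧
    (∑' n, (2:ℝ)^n * |a n|) ^ 2 ≤ 2 * ∑' n, (8:ℝ)^n * a n ^ 2 := by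
  have hg : Summable (fun n : ℕ => ((1:ℝ)/2)^n) := summable_geometric_two
  have key : ∀ (t : ℝ) (n : ℕ), 2 * t * ((2:ℝ)^n * |a n|) ≤ t^2 * (1/2)^n + (8:ℝ)^n * a n ^ 2 := by
    intro t n
    have h1 : (8:ℝ)^n = (2:ℝ)^n * (2^n * 2^n) := by rw [← mul_pow, ← mul_pow]; norm_num
    have h2 : ((1:ℝ)/2)^n * 2^n = 1 := by rw [← mul_pow]; norm_num
    have h3 : (0:ℝ) ≤ (1/2)^n := by positivity
    have h4 := mul_nonneg h3 (sq_nonneg (t - 2^n * 2^n * |a n|))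
    have h5 : a n ^ 2 = |a n| ^ 2 := (sq_abs _).symm
    rw [h5, h1]
    have : (1/2:ℝ)^n * (t - 2^n * 2^n * |a n|)^2 = t^2 * (1/2)^n - 2 * t * ((1/2)^n * 2^n) * (2^n * |a n|) + ((1/2)^n * 2^n) * (2^n * (2^n * 2^n)) * |a n|^2 := by ring
    rw [h2] at this
    linarith
  have hs : Summable (fun n => (2:ℝ)^n * |a n|) := by
    refine Summable.of_nonneg_of_le (fun n => by positivity) (fun n => ?_) (hg.add ha)
    have := key 1 n
    have h0 : (0:ℝ) ≤ 2^n * |a n| := by positivity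
    linarith
  refine ⟨hs, ?_⟩
  set A := ∑' n, (2:ℝ)^n * |a n| with hA
  have h := (hs.mul_left (2 * (A/2))).tsum_le_tsum (key (A/2)) ((hg.mul_left ((A/2)^2)).add ha)
  rw [tsum_mul_left, (hg.mul_left ((A/2)^2)).tsum_add ha, tsum_mul_left, tsum_geometric_two, ← hA] at h
  nlinarith

lemma glide {ι : Type*} (β : ι → ℝ) (d : ℕ → ι → ℝ) (D : ι → ℝ) (hβ : ∀ i, 0 ≤ β i)
    (hd : ∀ n, Summable (fun i => β i * d n i ^ 2))
    (hle : ∀ n, ∑' i, β i * d n i ^ 2 ≤ (1/16)^n)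
    (hD : ∀ i, 0 < β i → Summable (fun n => (8:ℝ)^n * d n i ^ 2) →
      |D i| ≤ ∑' n, (2:ℝ)^n * |d n i|) :
    (∀ i, 0 < β i → Summable (fun n => (8:ℝ)^n * d n i ^ 2)) ∧
    Summable (fun i => β i * D i ^ 2) := by
  have hf : Summable (fun p : ℕ × ι => (8:ℝ)^p.1 * (β p.2 * d p.1 p.2 ^ 2)) := by
    rw [summable_prod_of_nonneg]
    · have hA : ∀ n : ℕ, Summable (fun i => (8:ℝ)^n * (β i * d n i ^ 2)) :=
        fun n => (hd n).mul_left ((8:ℝ)^n)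
      refine ⟨hA, ?_⟩
      refine Summable.of_nonneg_of_le (fun n => tsum_nonneg fun i => ?_) (fun n => ?_) summable_geometric_two
      · have := hβ i; positivity
      · simp only
        rw [tsum_mul_left]
        calc (8:ℝ)^n * _ ≤ 8^n * (1/16)^n := by gcongr; exact hle n
          _ = (1/2)^n := by rw [← mul_pow]; norm_num
    · intro p; have := hβ p.2; simp only [Pi.zero_apply]; positivity
  have hf2 := (Equiv.prodComm ι ℕ).summable_iff.mpr hf
  have h1 : ∀ i, Summable (fun n => β i * ((8:ℝ)^n * d n i ^ 2)) := by
    intro i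
    refine (hf2.prod_factor i).congr fun n => ?_
    simp; ring
  have h2 : Summable (fun i => ∑' n, β i * ((8:ℝ)^n * d n i ^ 2)) := by
    refine hf2.prod.congr fun i => tsum_congr fun n => ?_
    simp; ring
  have h3 : ∀ i, 0 < β i → Summable (fun n => (8:ℝ)^n * d n i ^ 2) := fun i hi =>
    (summable_mul_left_iff hi.ne').mp (h1 i)
  refine ⟨h3, ?_⟩
  refine Summable.of_nonneg_of_le (fun i => mul_nonneg (hβ i) (sq_nonneg _)) (fun i => ?_) (h2.mul_left 2)
  rcases (hβ i).eq_or_lt with h0 | h0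
  · simp [← h0]
  · obtain ⟨-, h5⟩ := cs_aux _ (h3 i h0)
    have h6 := hD i h0 (h3 i h0)
    have h7 : D i ^ 2 ≤ (∑' n, (2:ℝ)^n * |d n i|)^2 := by
      rw [← sq_abs]; gcongr
    rw [tsum_mul_left]
    nlinarith

/-- twice the energy -/
noncomputable def en {X : Type*} (b : X → X → ℝ) (u : X → ℝ) : ℝ :=
  ∑' p : X × X, b p.1 p.2 * (u p.1 - u p.2) ^ 2

/-- No sequence of unit-height functions with small form norm. -/
lemma no_glide {X : Type*} (b : X → X → ℝ) (m : X → ℝ)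
    (hb : IsGraph b) (hm : FinMeasure m) (hcc : CanCompact b m)
    (H : ∀ δ > 0, ∃ w : X → ℝ, (∀ x, 0 ≤ w x) ∧ MemDQ b m w ∧ en b w ≤ δ ∧
      ∑' x, w x ^ 2 * m x ≤ δ ∧ ∃ x, 1 ≤ w x) : False := by
  choose w h0 hw he hl hx using fun n : ℕ => H ((1/16)^n) (by positivity)
  set S : X → ℝ := fun x => ∑' n, (2:ℝ)^n * w n x with hS
  have hmul : ∀ n, (fun x => m x * w n x ^ 2) = fun x => w n x ^ 2 * m x := fun n => by
    ext x; ring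
  have hLs := glide m w S (fun x => (hm.pos x).le) (fun n => by rw [hmul]; exact (hw n).1)
    (fun n => by rw [hmul]; exact hl n) (fun x _ _ => by
      simp only [hS, abs_of_nonneg (h0 _ _)]
      rw [abs_of_nonneg]
      exact tsum_nonneg fun n => mul_nonneg (by positivity) (h0 _ _))
  have hsum : ∀ x, Summable (fun n => (2:ℝ)^n * w n x) := fun x => by
    have := (cs_aux _ (hLs.1 x (hm.pos x))).1
    simpa only [abs_of_nonneg (h0 _ _)] using this
  have hE := glide (fun p : X × X => b p.1 p.2) (fun n p => w n p.1 - w n p.2)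
    (fun p => S p.1 - S p.2) (fun p => hb.nonneg _ _) (fun n => (hw n).2) (fun n => he n) (by
      intro p _ hp
      have h1 := (cs_aux _ hp).1
      have h2 : S p.1 - S p.2 = ∑' n, (2:ℝ)^n * (w n p.1 - w n p.2) := by
        simp only [hS]
        rw [← (hsum p.1).tsum_sub (hsum p.2)]
        exact tsum_congr fun n => by ring
      rw [h2]
      have h3 : ∀ n, ‖(2:ℝ)^n * (w n p.1 - w n p.2)‖ = 2^n * |w n p.1 - w n p.2| := fun n => by
        rw [Real.norm_eq_abs, abs_mul, abs_of_nonneg (by positivity : (0:ℝ) ≤ 2^n)]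
      have h4 := norm_tsum_le_tsum_norm (f := fun n => (2:ℝ)^n * (w n p.1 - w n p.2)) (by
        simpa only [h3] using h1)
      simp only [h3] at h4
      exact h4)
  obtain ⟨M, hM⟩ := hcc S ⟨by
    refine hLs.2.congr fun x => by ring, hE.2⟩
  obtain ⟨n, hn⟩ := pow_unbounded_of_one_lt M (by norm_num : (1:ℝ) < 2)
  obtain ⟨x, hx⟩ := hx n
  have h1 : (2:ℝ)^n * w n x ≤ S x :=
    (hsum x).le_tsum n (fun k _ => mul_nonneg (by positivity) (h0 _ _))
  have h2 := (le_abs_self _).trans (hM x)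
  have h3 : (2:ℝ)^n ≤ 2^n * w n x := le_mul_of_one_le_right (by positivity) hx
  linarith

lemma en_nonneg {X : Type*} {b : X → X → ℝ} (hb : IsGraph b) (u : X → ℝ) : 0 ≤ en b u :=
  tsum_nonneg fun p => mul_nonneg (hb.nonneg _ _) (sq_nonneg _)

lemma point_bound {X : Type*} (b : X → X → ℝ) (hb : IsGraph b) (hconn : GraphConnected b)
    (o x : X) : ∃ C : ℝ, 0 ≤ C ∧ ∀ u : X → ℝ, FinEnergy b u → (u x - u o) ^ 2 ≤ C * en b u := by
  induction hconn o x with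
  | refl => exact ⟨0, le_rfl, fun u _ => by simp⟩
  | @tail y z _ hyz ih =>
    obtain ⟨C, hC, h⟩ := ih
    refine ⟨2 * C + 2 / b y z, by positivity, fun u hu => ?_⟩
    have h1 := h u hu
    have h2 : b y z * (u y - u z) ^ 2 ≤ en b u :=
      hu.le_tsum (y, z) (fun p _ => mul_nonneg (hb.nonneg _ _) (sq_nonneg _))
    have h3 : (u y - u z) ^ 2 ≤ en b u / b y z := by
      rw [le_div_iff₀ hyz]; linarith
    have h4 : (2 * C + 2 / b y z) * en b u = 2 * (C * en b u) + 2 * (en b u / b y z) := by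
      field_simp
    rw [h4]
    nlinarith [sq_nonneg ((u y - u o) + (u y - u z))]

lemma FinEnergy.smul {X : Type*} {b : X → X → ℝ} {u : X → ℝ} (hu : FinEnergy b u) (t : ℝ) :
    FinEnergy b (fun x => t * u x) ∧ en b (fun x => t * u x) = t ^ 2 * en b u := by
  have : (fun p : X × X => b p.1 p.2 * (t * u p.1 - t * u p.2) ^ 2) =
      fun p => t ^ 2 * (b p.1 p.2 * (u p.1 - u p.2) ^ 2) := by ext p; ring
  refine ⟨?_, ?_⟩
  · unfold FinEnergy; rw [this]; exact Summable.mul_left _ hu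
  · unfold en; rw [this, tsum_mul_left]

lemma FinEnergy.contr {X : Type*} {b : X → X → ℝ} (hb : IsGraph b) {u w : X → ℝ}
    (hu : FinEnergy b u) (hw : ∀ x y, |w x - w y| ≤ |u x - u y|) :
    FinEnergy b w ∧ en b w ≤ en b u := by
  have h : ∀ p : X × X, b p.1 p.2 * (w p.1 - w p.2) ^ 2 ≤ b p.1 p.2 * (u p.1 - u p.2) ^ 2 :=
    fun p => mul_le_mul_of_nonneg_left (sq_le_sq.mpr (hw _ _)) (hb.nonneg _ _)
  have h1 : FinEnergy b w := Summable.of_nonneg_of_le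
    (fun p => mul_nonneg (hb.nonneg _ _) (sq_nonneg _)) h hu
  exact ⟨h1, Summable.tsum_le_tsum h h1 hu⟩

lemma memL2_bdd {X : Type*} {m : X → ℝ} (hm : FinMeasure m) {u : X → ℝ} {M : ℝ}
    (hM : ∀ x, |u x| ≤ M) : MemL2 m u := by
  refine Summable.of_nonneg_of_le (fun x => mul_nonneg (sq_nonneg _) (hm.pos x).le) (fun x => ?_)
    (hm.summable.mul_left (M ^ 2))
  refine mul_le_mul_of_nonneg_right ?_ (hm.pos x).le
  rw [← sq_abs]
  exact pow_le_pow_left₀ (abs_nonneg _) (hM x) 2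

lemma poincare {X : Type*} (b : X → X → ℝ) (m : X → ℝ)
    (hb : IsGraph b) (hconn : GraphConnected b) (hm : FinMeasure m) (hcc : CanCompact b m)
    (o : X) : ∃ C : ℝ, 0 ≤ C ∧ ∀ u : X → ℝ, FinEnergy b u → u o = 0 →
      ∀ x, u x ^ 2 ≤ C * en b u := by
  by_contra hcon
  push Not at hcon
  choose u hu huo x hx using fun k : ℕ => hcon ((k:ℝ)+1) (by positivity)
  -- normalized and truncated
  set v : ℕ → X → ℝ := fun k y => (u k (x k))⁻¹ * u k y with hv
  have hne : ∀ k, 0 < u k (x k) ^ 2 := fun k =>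
    lt_of_le_of_lt (mul_nonneg (by positivity) (en_nonneg hb _)) (hx k)
  have hvE : ∀ k, FinEnergy b (v k) := fun k => ((hu k).smul _).1
  have hve : ∀ k, en b (v k) ≤ 1 / ((k:ℝ)+1) := fun k => by
    rw [((hu k).smul _).2, inv_pow, ← div_eq_inv_mul, div_le_div_iff₀ (hne k) (by positivity)]
    linarith [hx k]
  set w : ℕ → X → ℝ := fun k y => min 1 |v k y| with hw
  have hwE : ∀ k, FinEnergy b (w k) ∧ en b (w k) ≤ en b (v k) := fun k =>
    (hvE k).contr hb (fun y z => by
      simp only [hw]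
      refine le_trans ?_ (abs_abs_sub_abs_le (v k y) (v k z))
      have := abs_min_sub_min_le_max 1 |v k y| 1 |v k z|
      simpa using this)
  have hw0 : ∀ k y, 0 ≤ w k y := fun k y => le_min zero_le_one (abs_nonneg _)
  have hw1 : ∀ k y, w k y ≤ 1 := fun k y => min_le_left _ _
  have hlim0 : Filter.Tendsto (fun k : ℕ => 1 / ((k:ℝ)+1)) Filter.atTop (nhds 0) :=
    tendsto_one_div_add_atTop_nhds_zero_nat
  have hpt : ∀ y, Filter.Tendsto (fun k => w k y ^ 2 * m y) Filter.atTop (nhds 0) := by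
    intro y
    obtain ⟨C, hC, h⟩ := point_bound b hb hconn o y
    have hbd : ∀ k, w k y ^ 2 * m y ≤ (C * m y) * (1 / ((k:ℝ)+1)) := by
      intro k
      have h1 := h (v k) (hvE k)
      have h2 : v k o = 0 := by simp [hv, huo]
      rw [h2, sub_zero] at h1
      have h3 : w k y ^ 2 ≤ v k y ^ 2 := by
        rw [← sq_abs (v k y)]
        exact pow_le_pow_left₀ (hw0 k y) (min_le_right _ _) 2
      have h4 : C * en b (v k) ≤ C * (1 / ((k:ℝ)+1)) := mul_le_mul_of_nonneg_left (hve k) hC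
      have h5 : w k y ^ 2 ≤ C * (1 / ((k:ℝ)+1)) := by linarith
      have := mul_le_mul_of_nonneg_right h5 (hm.pos y).le
      linarith
    refine squeeze_zero (fun k => mul_nonneg (sq_nonneg _) (hm.pos y).le) hbd ?_
    simpa using hlim0.const_mul (C * m y)
  have htsum : Filter.Tendsto (fun k => ∑' y, w k y ^ 2 * m y) Filter.atTop (nhds 0) := by
    have := tendsto_tsum_of_dominated_convergence (f := fun k y => w k y ^ 2 * m y)
      (g := fun _ => (0:ℝ)) (bound := m) (𝓕 := Filter.atTop) hm.summable hpt
      (Filter.Eventually.of_forall fun k y => by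
        rw [Real.norm_eq_abs, abs_of_nonneg (mul_nonneg (sq_nonneg _) (hm.pos y).le)]
        exact mul_le_of_le_one_left (hm.pos y).le (pow_le_one₀ (hw0 k y) (hw1 k y)))
    simpa using this
  refine no_glide b m hb hm hcc fun δ hδ => ?_
  obtain ⟨k, h1, h2⟩ := ((htsum.eventually (gt_mem_nhds hδ)).and
    (hlim0.eventually (gt_mem_nhds hδ))).exists
  refine ⟨w k, hw0 k, ⟨memL2_bdd hm (M := 1) fun y => ?_, (hwE k).1⟩, ?_, h1.le, x k, ?_⟩
  · rw [abs_of_nonneg (hw0 k y)]; exact hw1 k y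
  · exact ((hwE k).2.trans (hve k)).trans h2.le
  · have : v k (x k) = 1 := by
      have := hne k
      simp only [hv]
      exact inv_mul_cancel₀ (fun h => by simp [h] at this)
    simp [hw, this]

lemma FinEnergy.add {X : Type*} {b : X → X → ℝ} (hb : IsGraph b) {u v : X → ℝ}
    (hu : FinEnergy b u) (hv : FinEnergy b v) : FinEnergy b (u + v) := by
  refine Summable.of_nonneg_of_le (fun p => mul_nonneg (hb.nonneg _ _) (sq_nonneg _)) (fun p => ?_)
    ((Summable.add hu hv).mul_left 2)
  have h0 := hb.nonneg p.1 p.2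
  have h1 := mul_nonneg h0 (sq_nonneg ((u p.1 - u p.2) - (v p.1 - v p.2)))
  simp only [Pi.add_apply]
  nlinarith

/-- finite energy functions vanishing at `o` -/
def USp {X : Type*} (b : X → X → ℝ) (hb : IsGraph b) (o : X) : Submodule ℝ (X → ℝ) where
  carrier := {u | FinEnergy b u ∧ u o = 0}
  add_mem' := fun hu hv => ⟨hu.1.add hb hv.1, by simp [hu.2, hv.2]⟩
  zero_mem' := ⟨by simp [FinEnergy, summable_zero], rfl⟩
  smul_mem' := fun t u hu => ⟨(hu.1.smul t).1, by simp [hu.2]⟩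

lemma grad_mem {X : Type*} {b : X → X → ℝ} (hb : IsGraph b) {u : X → ℝ} (hu : FinEnergy b u) :
    Memℓp (fun p : X × X => Real.sqrt (b p.1 p.2) * (u p.1 - u p.2)) 2 := by
  refine memℓp_gen (hu.congr fun p => ?_)
  simp [mul_pow, Real.sq_sqrt (hb.nonneg _ _)]

/-- the gradient map -/
noncomputable def gradT {X : Type*} (b : X → X → ℝ) (hb : IsGraph b) (o : X) :
    USp b hb o →ₗ[ℝ] lp (fun _ : X × X => ℝ) 2 where
  toFun u := ⟨fun p => Real.sqrt (b p.1 p.2) * (u.1 p.1 - u.1 p.2), grad_mem hb u.2.1⟩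
  map_add' u v := by
    ext p
    change Real.sqrt (b p.1 p.2) * ((u.1 p.1 + v.1 p.1) - (u.1 p.2 + v.1 p.2)) =
      Real.sqrt (b p.1 p.2) * (u.1 p.1 - u.1 p.2) + Real.sqrt (b p.1 p.2) * (v.1 p.1 - v.1 p.2)
    ring
  map_smul' t u := by
    ext p
    simp
    ring

lemma gradT_apply {X : Type*} (b : X → X → ℝ) (hb : IsGraph b) (o : X) (u : USp b hb o)
    (p : X × X) : gradT b hb o u p = Real.sqrt (b p.1 p.2) * (u.1 p.1 - u.1 p.2) := rfl

lemma gradT_inner {X : Type*} (b : X → X → ℝ) (hb : IsGraph b) (o : X) (u v : USp b hb o) :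
    inner ℝ (gradT b hb o u) (gradT b hb o v) =
      ∑' p : X × X, b p.1 p.2 * (u.1 p.1 - u.1 p.2) * (v.1 p.1 - v.1 p.2) := by
  rw [lp.inner_eq_tsum]
  refine tsum_congr fun p => ?_
  rw [gradT_apply, gradT_apply]
  have := Real.mul_self_sqrt (hb.nonneg p.1 p.2)
  simp only [RCLike.inner_apply, conj_trivial]
  linear_combination (u.1 p.1 - u.1 p.2) * (v.1 p.1 - v.1 p.2) * this

lemma gradT_norm {X : Type*} (b : X → X → ℝ) (hb : IsGraph b) (o : X) (u : USp b hb o) :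
    ‖gradT b hb o u‖ ^ 2 = en b u.1 := by
  rw [← real_inner_self_eq_norm_sq, gradT_inner]
  exact tsum_congr fun p => by ring

lemma l2_l1 {X : Type*} {m : X → ℝ} (hm : FinMeasure m) {g : X → ℝ} (hg : MemL2 m g) :
    Summable (fun x => |g x| * m x) := by
  refine Summable.of_nonneg_of_le (fun x => mul_nonneg (abs_nonneg _) (hm.pos x).le) (fun x => ?_)
    (Summable.add hg hm.summable)
  have h0 := hm.pos x
  have : |g x| ≤ g x ^ 2 + 1 := by
    rw [← sq_abs]; nlinarith [sq_nonneg (|g x| - 1)]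
  nlinarith

lemma summable_bdd {X : Type*} {m : X → ℝ} (hm : FinMeasure m) {g : X → ℝ} (hg : MemL2 m g)
    {u : X → ℝ} {M : ℝ} (hM : ∀ x, |u x| ≤ M) :
    Summable (fun x => g x * u x * m x) ∧ |∑' x, g x * u x * m x| ≤ (∑' x, |g x| * m x) * M := by
  have hb : ∀ x, ‖g x * u x * m x‖ ≤ |g x| * m x * M := fun x => by
    rw [Real.norm_eq_abs, abs_mul, abs_mul, abs_of_pos (hm.pos x)]
    have := mul_le_mul_of_nonneg_left (hM x) (mul_nonneg (abs_nonneg (g x)) (hm.pos x).le)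
    linarith
  have hs := (l2_l1 hm hg).mul_right M
  refine ⟨Summable.of_norm_bounded hs hb, ?_⟩
  rw [← tsum_mul_right]
  exact tsum_of_norm_bounded hs.hasSum hb

lemma solve {X : Type*} (b : X → X → ℝ) (m : X → ℝ)
    (hb : IsGraph b) (hconn : GraphConnected b) (hm : FinMeasure m) (hcc : CanCompact b m)
    (o : X) (g : X → ℝ) (hg : MemL2 m g) (hg0 : ∑' x, g x * m x = 0) :
    ∃ v : X → ℝ, IsLap b m v g := by
  obtain ⟨C, hC, hP⟩ := poincare b m hb hconn hm hcc o
  set T := gradT b hb o with hT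
  have hPT : ∀ (u : USp b hb o) (x : X), |u.1 x| ≤ Real.sqrt C * ‖T u‖ := by
    intro u x
    refine abs_le_of_sq_le_sq ?_ (by positivity)
    rw [mul_pow, Real.sq_sqrt hC, gradT_norm]
    exact hP u.1 u.2.1 u.2.2 x
  have hinj : Function.Injective T := by
    rw [injective_iff_map_eq_zero]
    intro u hu
    ext x
    have := hPT u x
    rw [hu, norm_zero, mul_zero] at this
    simpa using this
  -- the range is closed
  have hclosed : IsClosed (LinearMap.range T : Set (lp (fun _ : X × X => ℝ) 2)) := by
    refine IsSeqClosed.isClosed ?_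
    intro F G hF hFG
    choose u hu using hF
    have hcau : ∀ x, CauchySeq (fun n => (u n).1 x) := by
      intro x
      have hc := hFG.cauchySeq
      rw [Metric.cauchySeq_iff] at hc ⊢
      intro ε hε
      obtain ⟨N, hN⟩ := hc (ε / (Real.sqrt C + 1)) (by positivity)
      refine ⟨N, fun i hi j hj => ?_⟩
      have h1 := hN i hi j hj
      have h2 := hPT (u i - u j) x
      rw [map_sub, hu, hu, ← dist_eq_norm] at h2
      rw [Real.dist_eq]
      rw [lt_div_iff₀ (by positivity)] at h1
      have h3 : (0:ℝ) ≤ dist (F i) (F j) := dist_nonneg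
      have h4 : |(u i).1 x - (u j).1 x| ≤ Real.sqrt C * dist (F i) (F j) := h2
      nlinarith
    choose v hv using fun x => cauchySeq_tendsto_of_complete (hcau x)
    have hG : ∀ p : X × X, G p = Real.sqrt (b p.1 p.2) * (v p.1 - v p.2) := by
      intro p
      have h1 : Filter.Tendsto (fun n => F n p) Filter.atTop (nhds (G p)) := by
        rw [tendsto_iff_norm_sub_tendsto_zero] at hFG ⊢
        refine squeeze_zero (fun n => norm_nonneg _) (fun n => ?_) hFG
        exact lp.norm_apply_le_norm (by norm_num) (F n - G) p
      have h2 : Filter.Tendsto (fun n => F n p) Filter.atTop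
          (nhds (Real.sqrt (b p.1 p.2) * (v p.1 - v p.2))) := by
        have := ((hv p.1).sub (hv p.2)).const_mul (Real.sqrt (b p.1 p.2))
        refine this.congr fun n => ?_
        rw [← hu n]; rfl
      exact tendsto_nhds_unique h1 h2
    have hvE : FinEnergy b v := by
      have := (lp.memℓp G).summable (by norm_num)
      refine this.congr fun p => ?_
      rw [hG p]
      simp [mul_pow, Real.sq_sqrt (hb.nonneg _ _)]
    have hvo : v o = 0 := by
      refine tendsto_nhds_unique (hv o) ?_
      have : (fun n => (u n).1 o) = fun _ => 0 := funext fun n => (u n).2.2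
      rw [this]; exact tendsto_const_nhds
    refine ⟨⟨v, hvE, hvo⟩, ?_⟩
    ext p
    rw [hG p]; rfl
  haveI : CompleteSpace (LinearMap.range T) := hclosed.completeSpace_coe
  -- the functional
  let e := LinearEquiv.ofInjective T hinj
  let ℓ : USp b hb o →ₗ[ℝ] ℝ :=
    { toFun := fun u => ∑' x, g x * u.1 x * m x
      map_add' := fun u v => by
        rw [← (summable_bdd hm hg (hPT u)).1.tsum_add (summable_bdd hm hg (hPT v)).1]
        exact tsum_congr fun x => by simp; ring
      map_smul' := fun t u => by
        simp only [smul_eq_mul, RingHom.id_apply]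
        rw [← tsum_mul_left]
        exact tsum_congr fun x => by simp; ring }
  let φ : LinearMap.range T →L[ℝ] ℝ :=
    (ℓ.comp e.symm.toLinearMap).mkContinuous ((∑' x, |g x| * m x) * Real.sqrt C) (by
      intro F
      have h1 := (summable_bdd hm hg (hPT (e.symm F))).2
      have h2 : T (e.symm F) = F.1 := by
        have := e.apply_symm_apply F
        exact congrArg Subtype.val this
      rw [h2, ← mul_assoc] at h1
      exact h1)
  obtain ⟨F, hF⟩ : ∃ F : LinearMap.range T, ∀ G, inner ℝ F G = φ G :=
    ⟨(InnerProductSpace.toDual ℝ _).symm φ, fun G => InnerProductSpace.toDual_symm_apply⟩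
  obtain ⟨_, v, rfl⟩ := F
  have hv : ∀ w : USp b hb o, inner ℝ (T v) (T w) = ∑' x, g x * w.1 x * m x := by
    intro w
    have h1 := hF (e w)
    have h2 : φ (e w) = ∑' x, g x * w.1 x * m x := by
      change ℓ (e.symm (e w)) = _
      rw [e.symm_apply_apply]; rfl
    rw [h2] at h1
    exact h1
  -- solution is 2 v
  have h2v : FinEnergy b (fun x => 2 * v.1 x) := (v.2.1.smul 2).1
  refine ⟨fun x => 2 * v.1 x, ⟨memL2_bdd hm (M := 2 * (Real.sqrt C * ‖T v‖)) fun x => ?_, h2v⟩,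
    hg, fun w hw => ?_⟩
  · rw [abs_mul, abs_two]
    have := hPT v x
    linarith
  · have hwE : FinEnergy b (fun x => w x - w o) := by
      refine hw.2.congr fun p => by ring_nf
    have h1 := hv ⟨fun x => w x - w o, hwE, by simp⟩
    rw [gradT_inner] at h1
    obtain ⟨M, hM⟩ := hcc w hw
    have h2 : ∑' x, g x * (w x - w o) * m x = ∑' x, g x * w x * m x := by
      have hs := (summable_bdd hm hg (u := fun _ => w o) (M := M) (fun _ => hM o)).1
      have : ∀ x, g x * (w x - w o) * m x = g x * w x * m x - g x * w o * m x := fun x => by ring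
      simp only [this]
      rw [(summable_bdd hm hg hM).1.tsum_sub hs]
      have h3 : ∑' x, g x * w o * m x = 0 := by
        have : ∀ x, g x * w o * m x = w o * (g x * m x) := fun x => by ring
        simp only [this]
        rw [tsum_mul_left, hg0, mul_zero]
      rw [h3, sub_zero]
    rw [← h2, ← h1]
    unfold energyBil
    rw [← tsum_mul_left]
    exact tsum_congr fun p => by ring

lemma IsLap.affine {X : Type*} {b : X → X → ℝ} {m : X → ℝ} (hm : FinMeasure m)
    (hcc : CanCompact b m) {v g : X → ℝ} (hv : IsLap b m v g) (a t : ℝ) :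
    IsLap b m (fun x => a * v x + t) (fun x => a * g x) := by
  obtain ⟨M, hM⟩ := hcc v hv.1
  refine ⟨⟨memL2_bdd hm (M := |a| * M + |t|) fun x => ?_, ?_⟩, ?_, fun w hw => ?_⟩
  · refine (abs_add_le _ _).trans ?_
    rw [abs_mul]
    have := mul_le_mul_of_nonneg_left (hM x) (abs_nonneg a)
    linarith
  · refine (hv.1.2.smul a).1.congr fun p => by ring
  · refine (Summable.mul_left (a^2) hv.2.1).congr fun x => by ring
  · have h1 := hv.2.2 w hw
    have h2 : energyBil b (fun x => a * v x + t) w = a * energyBil b v w := by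
      unfold energyBil
      rw [mul_left_comm, ← tsum_mul_left (a := a)]
      congr 1
      exact tsum_congr fun p => by ring
    rw [h2, h1, ← tsum_mul_left]
    exact tsum_congr fun x => by ring

lemma memL2_add {X : Type*} {m : X → ℝ} (hm : FinMeasure m) {u v : X → ℝ}
    (hu : MemL2 m u) (hv : MemL2 m v) : MemL2 m (fun x => u x + v x) := by
  refine Summable.of_nonneg_of_le (fun x => mul_nonneg (sq_nonneg _) (hm.pos x).le) (fun x => ?_)
    ((Summable.add hu hv).mul_left 2)
  have h0 := mul_nonneg (hm.pos x).le (sq_nonneg (u x - v x))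
  nlinarith

/-- if `h̄ < 0`, there is `c₋ < 0` so that for all `c₋ < c < 0` an
upper solution of `Lu = h e^u - c` exists; if moreover `h ≤ 0`, an upper solution
exists for every `c < 0`. -/
theorem stmt15 {X : Type*} [Countable X] (b : X → X → ℝ) (m : X → ℝ)
    (hb : IsGraph b) (hconn : GraphConnected b) (hm : FinMeasure m)
    (hcc : CanCompact b m) (h : X → ℝ) (hh2 : MemL2 m h) (hmean : mean m h < 0) :
    (∃ cm < (0 : ℝ), ∀ c : ℝ, cm < c → c < 0 →
      ∃ u₁ f₁ : X → ℝ, IsLap b m u₁ f₁ ∧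
        ∀ x, h x * Real.exp (u₁ x) - c ≤ f₁ x) ∧
    ((∀ x, h x ≤ 0) → ∀ c : ℝ, c < 0 →
      ∃ u₁ f₁ : X → ℝ, IsLap b m u₁ f₁ ∧
        ∀ x, h x * Real.exp (u₁ x) - c ≤ f₁ x) := by
  have hX : Nonempty X := by
    by_contra hne
    rw [not_nonempty_iff] at hne
    simp [mean] at hmean
  obtain ⟨o⟩ := hX
  set V := ∑' x, m x with hV
  have hVpos : 0 < V := hm.summable.tsum_pos (fun x => (hm.pos x).le) o (hm.pos o)
  set H := ∑' x, h x * m x with hH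
  have hHneg : H < 0 := by
    have : H / V < 0 := hmean
    by_contra hc
    push Not at hc
    exact absurd (div_nonneg hc hVpos.le) (not_le.mpr this)
  have hconst : ∀ k : ℝ, MemL2 m (fun _ => k) := fun k => memL2_bdd hm (M := |k|) fun _ => le_rfl
  have habs : Summable (fun x => |h x| * m x) := l2_l1 hm hh2
  have hhs : Summable (fun x => h x * m x) :=
    Summable.of_norm_bounded habs fun x => by
      rw [Real.norm_eq_abs, abs_mul, abs_of_pos (hm.pos x)]
  set A := ∑' x, |h x| * m x with hA
  have hA0 : 0 ≤ A := tsum_nonneg fun x => mul_nonneg (abs_nonneg _) (hm.pos x).le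
  -- solve with right side `h + ε |h| + k`
  have hsolve : ∀ ε : ℝ, ∃ v, IsLap b m v (fun x => h x + (ε * |h x| + -(H + ε * A) / V)) := by
    intro ε
    refine solve b m hb hconn hm hcc o _ ?_ ?_
    · refine memL2_add hm hh2 (memL2_add hm ?_ (hconst _))
      refine (Summable.mul_left (ε^2) hh2).congr fun x => ?_
      rw [mul_pow, sq_abs]; ring
    · have : ∀ x, (h x + (ε * |h x| + -(H + ε * A) / V)) * m x =
          h x * m x + (ε * (|h x| * m x) + -(H + ε * A) / V * m x) := fun x => by ring
      simp only [this]
      rw [hhs.tsum_add ((habs.mul_left ε).add (hm.summable.mul_left _)),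
        (habs.mul_left ε).tsum_add (hm.summable.mul_left _), tsum_mul_left, tsum_mul_left,
        ← hV, ← hH, ← hA, div_mul_cancel₀ _ hVpos.ne']
      ring
  constructor
  · set ε : ℝ := min (1/2) (-H / (2 * (A + 1))) with hε
    have hε0 : 0 < ε := lt_min (by norm_num) (div_pos (by linarith) (by positivity))
    have hε1 : ε ≤ 1/2 := min_le_left _ _
    have hεA : ε * A < -H := by
      have h1 : ε ≤ -H / (2 * (A + 1)) := min_le_right _ _
      rw [le_div_iff₀ (by positivity)] at h1
      nlinarith
    obtain ⟨v, hv⟩ := hsolve ε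
    set k := -(H + ε * A) / V with hk
    have hk0 : 0 < k := div_pos (by linarith) hVpos
    obtain ⟨M, hM⟩ := hcc v hv.1
    have hM0 : 0 ≤ M := (abs_nonneg _).trans (hM o)
    -- small parameter
    set s := min (Real.log (1 + ε)) (-Real.log (1 - ε)) with hs
    have hs0 : 0 < s := lt_min (Real.log_pos (by linarith))
      (neg_pos.mpr (Real.log_neg (by linarith) (by linarith)))
    set a := s / (M + 1) with ha
    have ha0 : 0 < a := by positivity
    have hav : ∀ x, |a * v x| ≤ s := fun x => by
      rw [abs_mul, abs_of_pos ha0, ha, div_mul_eq_mul_div, div_le_iff₀ (by positivity)]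
      have := hM x
      nlinarith
    refine ⟨-(a * k), by nlinarith, fun c hc _ => ?_⟩
    refine ⟨_, _, hv.affine hm hcc a (Real.log a), fun x => ?_⟩
    rw [Real.exp_add, Real.exp_log ha0]
    have hb1 := abs_le.mp (hav x)
    have he1 : Real.exp (a * v x) ≤ 1 + ε := by
      rw [← Real.exp_log (show (0:ℝ) < 1 + ε by linarith)]
      exact Real.exp_le_exp.mpr (hb1.2.trans (min_le_left _ _))
    have he2 : 1 - ε ≤ Real.exp (a * v x) := by
      rw [← Real.exp_log (show (0:ℝ) < 1 - ε by linarith)]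
      refine Real.exp_le_exp.mpr (le_trans ?_ hb1.1)
      have : s ≤ -Real.log (1 - ε) := min_le_right _ _
      linarith
    have hmain : h x * Real.exp (a * v x) ≤ h x + ε * |h x| := by
      rcases le_total 0 (h x) with h0 | h0
      · rw [abs_of_nonneg h0]; nlinarith
      · rw [abs_of_nonpos h0]; nlinarith
    have := mul_le_mul_of_nonneg_left hmain ha0.le
    nlinarith
  · intro hneg c hc
    obtain ⟨v, hv⟩ := hsolve 0
    obtain ⟨M, hM⟩ := hcc v hv.1
    set k := -(H + 0 * A) / V with hk
    have hk0 : 0 < k := div_pos (by linarith) hVpos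
    set a := -c / k with ha
    have ha0 : 0 < a := div_pos (by linarith) hk0
    have hak : a * k = -c := div_mul_cancel₀ _ hk0.ne'
    refine ⟨_, _, hv.affine hm hcc a (a * M + Real.log a), fun x => ?_⟩
    have h1 := (abs_le.mp (hM x)).1
    have h2 : a ≤ Real.exp (a * v x + (a * M + Real.log a)) := by
      conv_lhs => rw [← Real.exp_log ha0]
      refine Real.exp_le_exp.mpr ?_
      nlinarith
    have h3 := mul_le_mul_of_nonpos_left h2 (hneg x)
    nlinarith
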